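/- Let B₊ denote the open upper half unit ball in ℝ³ and let g : ℝ³ → ℝ be continuous on the closure of B₊. Define Tg(x) = ∫₀¹ g(x₁, x₂, t·x₃) dt for x = (x₁,x₂,x₃) ∈ B₊. Then (∫_{B₊} |Tg(x)|² dx)^{1/2} ≤ 2·(∫_{B₊} |g(x)|² dx)^{1/2}. -/

import Mathlib

/-!
The proof is a Schur-type argument in place of Minkowski's integral inequality. For fixed `x`,
writing `1 = t^(-1/4) * t^(1/4)` and applying the Cauchy-Schwarz inequality gives
`(∫₀¹ h)² ≤ (∫₀¹ t^(-1/2)) (∫₀¹ t^(1/2) h²) = 2 ∫₀¹ t^(1/2) h²` (`sq_lintegral_Ioc_le`).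
Take `h t = |g (x₁, x₂, t x₃)|`, with `g` extended by zero outside the half ball, and integrate
in `x`. By Tonelli and the change of variables `y₃ = t x₃`, which costs a factor `t⁻¹`
(`lintegral_comp_scale`), the result is at most `2 ∫₀¹ t^(-1/2) dt ∫ g² = 4 ∫ g²`
(`lintegral_sq_average_le`).

The estimate is carried out with lower Lebesgue integrals, so that integrability is needed only
for `g²`, where it follows from continuity on the compact closure of the half ball.
-/

open scoped BigOperators
open MeasureTheory

/-- The open upper half unit ball in ℝ³. -/
def Bplus : Set (Fin 3 → ℝ) :=
  {x | x 0 ^ 2 + x 1 ^ 2 + x 2 ^ 2 < 1 ∧ 0 < x 2}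

open Set
open scoped ENNReal

lemma lintegral_comp_scale {t : ℝ} (ht : 0 < t) {F : (Fin 3 → ℝ) → ℝ≥0∞} (hF : Measurable F) :
    ∫⁻ x : Fin 3 → ℝ, F ![x 0, x 1, t * x 2] = ENNReal.ofReal t⁻¹ * ∫⁻ x, F x := by
  have hdet : (Matrix.diagonal ![1, 1, t]).det = t := by
    simp [Matrix.det_diagonal, Fin.prod_univ_three]
  have hmap := Real.map_matrix_volume_pi_eq_smul_volume_pi
    (M := Matrix.diagonal ![1, 1, t]) (by rw [hdet]; exact ht.ne')
  rw [hdet, abs_of_pos (inv_pos.2 ht)] at hmap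
  have hlin : ∀ x : Fin 3 → ℝ,
      (Matrix.toLin' (Matrix.diagonal ![1, 1, t])) x = ![x 0, x 1, t * x 2] := by
    intro x
    ext i
    fin_cases i <;> simp [Matrix.mulVec_diagonal]
  rw [← smul_eq_mul, ← lintegral_smul_measure, ← hmap, lintegral_map hF
    (LinearMap.continuous_of_finiteDimensional _).measurable]
  simp only [hlin]

lemma lintegral_rpow_neg_half :
    ∫⁻ t in Ioc (0 : ℝ) 1, ENNReal.ofReal (t ^ (-(1 / 2) : ℝ)) = 2 := by
  rw [← ofReal_integral_eq_lintegral_ofReal]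
  · rw [← intervalIntegral.integral_of_le zero_le_one, integral_rpow (Or.inl (by norm_num))]
    norm_num
  · exact (intervalIntegrable_iff_integrableOn_Ioc_of_le zero_le_one).1
      (intervalIntegral.intervalIntegrable_rpow' (by norm_num))
  · filter_upwards [ae_restrict_mem measurableSet_Ioc] with t ht
    exact Real.rpow_nonneg ht.1.le _

/-- Weighted Cauchy-Schwarz inequality on `(0, 1]`; the constant is `∫₀¹ t^(-1/2) dt = 2`. -/
lemma sq_lintegral_Ioc_le {H : ℝ → ℝ≥0∞} (hH : Measurable H) :
    (∫⁻ t in Ioc (0 : ℝ) 1, H t) ^ 2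
      ≤ 2 * ∫⁻ t in Ioc (0 : ℝ) 1, ENNReal.ofReal (t ^ (1 / 2 : ℝ)) * H t ^ 2 := by
  have hsplit : ∫⁻ t in Ioc (0 : ℝ) 1, H t = ∫⁻ t in Ioc (0 : ℝ) 1,
      ((fun t : ℝ => ENNReal.ofReal (t ^ (-(1 / 4) : ℝ))) *
        fun t : ℝ => ENNReal.ofReal (t ^ (1 / 4 : ℝ)) * H t) t := by
    refine setLIntegral_congr_fun measurableSet_Ioc fun t ht => ?_
    simp only [Pi.mul_apply]
    rw [← mul_assoc, ← ENNReal.ofReal_mul (Real.rpow_nonneg ht.1.le _), ← Real.rpow_add ht.1]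
    simp
  have hCS := ENNReal.lintegral_mul_le_Lp_mul_Lq (volume.restrict (Ioc (0 : ℝ) 1))
    Real.HolderConjugate.two_two
    (f := fun t : ℝ => ENNReal.ofReal (t ^ (-(1 / 4) : ℝ)))
    (g := fun t : ℝ => ENNReal.ofReal (t ^ (1 / 4 : ℝ)) * H t)
    (by fun_prop) (by fun_prop)
  have h1 : ∫⁻ t in Ioc (0 : ℝ) 1, ENNReal.ofReal (t ^ (-(1 / 4) : ℝ)) ^ (2 : ℝ) = 2 := by
    rw [← lintegral_rpow_neg_half]
    refine setLIntegral_congr_fun measurableSet_Ioc fun t ht => ?_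
    rw [ENNReal.ofReal_rpow_of_nonneg (Real.rpow_nonneg ht.1.le _) (by norm_num),
      ← Real.rpow_mul ht.1.le]
    norm_num
  have h2 : ∫⁻ t in Ioc (0 : ℝ) 1, (ENNReal.ofReal (t ^ (1 / 4 : ℝ)) * H t) ^ (2 : ℝ)
      = ∫⁻ t in Ioc (0 : ℝ) 1, ENNReal.ofReal (t ^ (1 / 2 : ℝ)) * H t ^ 2 := by
    refine setLIntegral_congr_fun measurableSet_Ioc fun t ht => ?_
    rw [ENNReal.mul_rpow_of_nonneg _ _ (by norm_num),
      ENNReal.ofReal_rpow_of_nonneg (Real.rpow_nonneg ht.1.le _) (by norm_num),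
      ← Real.rpow_mul ht.1.le, ENNReal.rpow_two]
    norm_num
  rw [h1, h2, ← hsplit] at hCS
  have hsq : ∀ a : ℝ≥0∞, (a ^ (1 / 2 : ℝ)) ^ 2 = a := fun a => by
    rw [← ENNReal.rpow_two, ← ENNReal.rpow_mul]; simp
  calc _ ≤ _ := pow_le_pow_left' hCS 2
    _ = _ := by rw [mul_pow, hsq, hsq]

/-- The averaging bound for an arbitrary nonnegative measurable function on the whole space. -/
lemma lintegral_sq_average_le {N : (Fin 3 → ℝ) → ℝ≥0∞} (hN : Measurable N) :
    ∫⁻ x : Fin 3 → ℝ, (∫⁻ t in Ioc (0 : ℝ) 1, N ![x 0, x 1, t * x 2]) ^ 2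
      ≤ 4 * ∫⁻ x, N x ^ 2 := by
  have hscale : Measurable fun p : (Fin 3 → ℝ) × ℝ => ![p.1 0, p.1 1, p.2 * p.1 2] := by
    refine measurable_pi_iff.2 fun i => ?_
    fin_cases i <;> simp <;> fun_prop
  have hNs : Measurable fun p : (Fin 3 → ℝ) × ℝ => N ![p.1 0, p.1 1, p.2 * p.1 2] :=
    hN.comp hscale
  calc ∫⁻ x : Fin 3 → ℝ, (∫⁻ t in Ioc (0 : ℝ) 1, N ![x 0, x 1, t * x 2]) ^ 2
      ≤ ∫⁻ x : Fin 3 → ℝ, 2 * ∫⁻ t in Ioc (0 : ℝ) 1,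
          ENNReal.ofReal (t ^ (1 / 2 : ℝ)) * N ![x 0, x 1, t * x 2] ^ 2 :=
        lintegral_mono fun x => sq_lintegral_Ioc_le (hNs.comp measurable_prodMk_left)
    _ = 2 * ∫⁻ t in Ioc (0 : ℝ) 1, ∫⁻ x : Fin 3 → ℝ,
          ENNReal.ofReal (t ^ (1 / 2 : ℝ)) * N ![x 0, x 1, t * x 2] ^ 2 := by
        rw [lintegral_const_mul' _ _ (by simp), lintegral_lintegral_swap]
        exact Measurable.aemeasurable (by unfold Function.uncurry; fun_prop)
    _ = 2 * ∫⁻ t in Ioc (0 : ℝ) 1,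
          ENNReal.ofReal (t ^ (-(1 / 2) : ℝ)) * ∫⁻ x, N x ^ 2 := by
        congr 1
        refine setLIntegral_congr_fun measurableSet_Ioc fun t ht => ?_
        rw [lintegral_const_mul' _ _ (by simp),
          lintegral_comp_scale ht.1 (F := fun x => N x ^ 2) (by fun_prop), ← mul_assoc,
          ← ENNReal.ofReal_mul (Real.rpow_nonneg ht.1.le _), ← Real.rpow_neg_one,
          ← Real.rpow_add ht.1]
        norm_num
    _ = 4 * ∫⁻ x, N x ^ 2 := by
        rw [lintegral_mul_const _ (by fun_prop), lintegral_rpow_neg_half, ← mul_assoc]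
        norm_num

lemma isOpen_Bplus : IsOpen Bplus := by
  have h1 : IsOpen {x : Fin 3 → ℝ | x 0 ^ 2 + x 1 ^ 2 + x 2 ^ 2 < 1} :=
    isOpen_lt (by fun_prop) (by fun_prop)
  have h2 : IsOpen {x : Fin 3 → ℝ | 0 < x 2} := isOpen_lt (by fun_prop) (by fun_prop)
  exact h1.inter h2

lemma isCompact_closure_Bplus : IsCompact (closure Bplus) := by
  refine ((Metric.isBounded_Icc (-1 : Fin 3 → ℝ) 1).subset ?_).isCompact_closure
  rintro x ⟨hx, -⟩
  refine ⟨fun i => ?_, fun i => ?_⟩ <;> fin_cases i <;> simp <;>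
    nlinarith [sq_nonneg (x 0), sq_nonneg (x 1), sq_nonneg (x 2)]

lemma scale_mem_Bplus {x : Fin 3 → ℝ} (hx : x ∈ Bplus) {t : ℝ} (ht : t ∈ Ioc (0 : ℝ) 1) :
    ![x 0, x 1, t * x 2] ∈ Bplus := by
  obtain ⟨h1, h2⟩ := hx
  refine ⟨?_, by simpa using mul_pos ht.1 h2⟩
  have h3 : (t * x 2) ^ 2 ≤ x 2 ^ 2 :=
    pow_le_pow_left₀ (mul_pos ht.1 h2).le (mul_le_of_le_one_left h2.le ht.2) 2
  simp
  linarith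

theorem stmt5 (g : (Fin 3 → ℝ) → ℝ) (hg : ContinuousOn g (closure Bplus)) :
    Real.sqrt (∫ x in Bplus, (∫ t in (0 : ℝ)..1, g ![x 0, x 1, t * x 2]) ^ 2)
      ≤ 2 * Real.sqrt (∫ x in Bplus, (g x) ^ 2) := by
  have hB : MeasurableSet Bplus := isOpen_Bplus.measurableSet
  have hint : IntegrableOn (fun x => g x ^ 2) Bplus :=
    ((hg.pow 2).integrableOn_compact isCompact_closure_Bplus).mono_set subset_closure
  have hGm : Measurable (Bplus.indicator g) := by
    classical
    rw [← piecewise_eq_indicator]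
    exact (hg.mono subset_closure).measurable_piecewise continuousOn_const hB
  have hofReal : ∀ a : ℝ, ENNReal.ofReal (a ^ 2) = ‖a‖ₑ ^ 2 := fun a => by
    rw [← sq_abs, ENNReal.ofReal_pow (abs_nonneg a), Real.enorm_eq_ofReal_abs]
  have hrhs : ∫⁻ x, ‖Bplus.indicator g x‖ₑ ^ 2 = ENNReal.ofReal (∫ x in Bplus, g x ^ 2) := by
    rw [ofReal_integral_eq_lintegral_ofReal hint (ae_of_all _ fun x => sq_nonneg _),
      ← lintegral_indicator hB]
    refine lintegral_congr fun x => ?_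
    by_cases hx : x ∈ Bplus <;> simp [hx, hofReal]
  have hlhs : ∫⁻ x in Bplus,
      ENNReal.ofReal ‖(∫ t in (0 : ℝ)..1, g ![x 0, x 1, t * x 2]) ^ 2‖
      ≤ 4 * ENNReal.ofReal (∫ x in Bplus, g x ^ 2) := by
    rw [← hrhs]
    refine le_trans ?_ ((setLIntegral_le_lintegral Bplus _).trans
      (lintegral_sq_average_le hGm.enorm))
    refine setLIntegral_mono' hB fun x hx => ?_
    rw [Real.norm_of_nonneg (sq_nonneg _), hofReal,
      intervalIntegral.integral_of_le zero_le_one]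
    refine pow_le_pow_left' ((enorm_integral_le_lintegral_enorm _).trans_eq ?_) 2
    refine setLIntegral_congr_fun measurableSet_Ioc fun t ht => ?_
    simp only [indicator_of_mem (scale_mem_Bplus hx ht)]
  have hnn : 0 ≤ ∫ x in Bplus, g x ^ 2 := integral_nonneg fun x => sq_nonneg _
  have key : ∫ x in Bplus, (∫ t in (0 : ℝ)..1, g ![x 0, x 1, t * x 2]) ^ 2
      ≤ 4 * ∫ x in Bplus, g x ^ 2 := by
    refine (Real.le_norm_self _).trans ((norm_integral_le_lintegral_norm _).trans ?_)
    refine (ENNReal.toReal_mono (by finiteness) hlhs).trans_eq ?_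
    rw [ENNReal.toReal_mul, ENNReal.toReal_ofReal hnn]
    norm_num
  calc _ ≤ Real.sqrt (4 * ∫ x in Bplus, g x ^ 2) := Real.sqrt_le_sqrt key
    _ = _ := by
      rw [Real.sqrt_mul (by norm_num), show (4 : ℝ) = 2 ^ 2 by norm_num,
        Real.sqrt_sq (by norm_num)]
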